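/- For every y ∈ (−1, −1/2), the function x ↦ x·ψ(x+y+1) − ln Γ(x+y+1) + ln Γ(y+1) − x^2/(2(y+1)(x+y+1)) is (strictly) decreasing on the interval [−2(y+1)^2/(1+2y), ∞). -/

import Mathlib

/-!
Write `a = y + 1 ∈ (0, 1/2)` and `u = x + a`. The derivative of the function is
`x (ψ'(u) - 1/(2au) - 1/(2u²))`, and for `x` beyond the left endpoint `u > a/(1 - 2a)`, that is
`1/(2a) > 1 + 1/(2u)`. Hence the derivative is negative as soon as `ψ'(u) ≤ 1/u + 1/u²`
(`deriv_digamma_le`).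

That bound says that `g(u) = ψ(u) - log u + 1/u` is antitone on `(0, ∞)` (`antitoneOn_gap`).
The functional equation gives `g(u + 1) - g(u) = 1/(u + 1) - log (u + 1) + log u`, an increasing
function of `u`; so for `u ≤ v` the sequence `g(u + n) - g(v + n)` is antitone in `n`. Its limit
is `0`, because log-convexity of `Γ` yields `0 ≤ g(u) ≤ 1/u`, and therefore its first term is
nonnegative.
-/

open Real

/-- The digamma function `ψ = Γ′/Γ`. -/
noncomputable def digamma (x : ℝ) : ℝ := deriv Real.Gamma x / Real.Gamma x


lemma hasDerivAt_log_Gamma {x : ℝ} (hx : 0 < x) :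
    HasDerivAt (fun t => Real.log (Real.Gamma t)) (digamma x) x := by
  have h : DifferentiableAt ℝ Real.Gamma x :=
    Real.differentiableOn_Gamma_Ioi.differentiableAt (Ioi_mem_nhds hx)
  exact h.hasDerivAt.log (Real.Gamma_pos_of_pos hx).ne'

lemma differentiableAt_digamma {x : ℝ} (hx : 0 < x) : DifferentiableAt ℝ digamma x := by
  have hopen : IsOpen {s : ℂ | 0 < s.re} :=
    Complex.continuous_re.isOpen_preimage _ isOpen_Ioi
  have hdiff : DifferentiableOn ℂ Complex.Gamma {s : ℂ | 0 < s.re} := by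
    intro s hs
    refine (Complex.differentiableAt_Gamma s ?_).differentiableWithinAt
    rintro m rfl
    have : (0 : ℝ) < (-(m : ℂ)).re := hs
    simp only [Complex.neg_re, Complex.natCast_re] at this
    linarith [(Nat.cast_nonneg m : (0 : ℝ) ≤ m)]
  have hC : ContDiffAt ℂ 2 Complex.Gamma (x : ℂ) :=
    (hdiff.analyticAt (hopen.mem_nhds (by simpa using hx))).contDiffAt
  have hR : ContDiffAt ℝ 2 Real.Gamma x := hC.real_of_complex
  have hd : DifferentiableAt ℝ (deriv Real.Gamma) x :=
    (hR.derivWithin (m := 1) (by norm_num)).differentiableAt one_ne_zero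
  exact hd.div (hR.differentiableAt two_ne_zero) (Real.Gamma_pos_of_pos hx).ne'

lemma log_Gamma_add_one {x : ℝ} (hx : 0 < x) :
    Real.log (Real.Gamma (x + 1)) = Real.log x + Real.log (Real.Gamma x) := by
  rw [Real.Gamma_add_one hx.ne', Real.log_mul hx.ne' (Real.Gamma_pos_of_pos hx).ne']

lemma digamma_add_one {x : ℝ} (hx : 0 < x) : digamma (x + 1) = digamma x + 1 / x := by
  have h1 : HasDerivAt (fun t => Real.log (Real.Gamma (t + 1))) (digamma (x + 1)) x :=
    (hasDerivAt_log_Gamma (by positivity : 0 < x + 1)).comp_add_const x 1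
  have h2 : HasDerivAt (fun t => Real.log t + Real.log (Real.Gamma t)) (x⁻¹ + digamma x) x :=
    (Real.hasDerivAt_log hx.ne').add (hasDerivAt_log_Gamma hx)
  have h3 := h2.congr_of_eventuallyEq (f₁ := fun t => Real.log (Real.Gamma (t + 1)))
    (by filter_upwards [Ioi_mem_nhds hx] with t ht using log_Gamma_add_one ht)
  rw [h1.unique h3, one_div, add_comm]

/-- The slope of `log Γ` over `[x, x + 1]` is `log x`, so convexity bounds the
derivative at the left end from above. -/
lemma digamma_le_log {x : ℝ} (hx : 0 < x) : digamma x ≤ Real.log x := by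
  have hx1 : 0 < x + 1 := by positivity
  have := Real.convexOn_log_Gamma.le_slope_of_hasDerivAt hx hx1 (lt_add_one x)
    (hasDerivAt_log_Gamma hx)
  simpa [slope_def_field, log_Gamma_add_one hx] using this

lemma log_le_digamma_add_one {x : ℝ} (hx : 0 < x) : Real.log x ≤ digamma (x + 1) := by
  have hx1 : 0 < x + 1 := by positivity
  have := Real.convexOn_log_Gamma.slope_le_of_hasDerivAt hx hx1 (lt_add_one x)
    (hasDerivAt_log_Gamma hx1)
  simpa [slope_def_field, log_Gamma_add_one hx] using this

lemma monotoneOn_gap_step :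
    MonotoneOn (fun u : ℝ => 1 / (u + 1) - Real.log (u + 1) + Real.log u) (Set.Ioi 0) := by
  have hd : ∀ u ∈ Set.Ioi (0 : ℝ),
      HasDerivAt (fun u : ℝ => 1 / (u + 1) - Real.log (u + 1) + Real.log u)
        (-1 / (u + 1) ^ 2 - 1 / (u + 1) + 1 / u) u := by
    intro u hu
    have hu0 : (0 : ℝ) < u := hu
    have h1 : HasDerivAt (fun u : ℝ => u + 1) 1 u := (hasDerivAt_id u).add_const 1
    have hne : u + 1 ≠ 0 := by positivity
    have h2 := ((h1.inv hne).sub (h1.log hne)).add (Real.hasDerivAt_log hu0.ne')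
    exact (h2.congr_deriv (by simp [one_div])).congr_of_eventuallyEq
      (Filter.Eventually.of_forall fun t => by simp [one_div])
  refine monotoneOn_of_deriv_nonneg (convex_Ioi 0)
    (fun u hu => (hd u hu).continuousAt.continuousWithinAt) ?_ ?_
  · rw [interior_Ioi]
    exact fun u hu => (hd u hu).differentiableAt.differentiableWithinAt
  · rw [interior_Ioi]
    intro u hu
    have hu0 : (0 : ℝ) < u := hu
    rw [(hd u hu).deriv]
    have : -1 / (u + 1) ^ 2 - 1 / (u + 1) + 1 / u = 1 / (u * (u + 1) ^ 2) := by
      field_simp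
      ring
    rw [this]
    positivity

lemma antitoneOn_gap :
    AntitoneOn (fun u : ℝ => digamma u - Real.log u + 1 / u) (Set.Ioi 0) := by
  intro u hu v hv huv
  have hu0 : (0 : ℝ) < u := hu
  have hv0 : (0 : ℝ) < v := hv
  let g : ℝ → ℝ := fun u => digamma u - Real.log u + 1 / u
  have g_nonneg : ∀ t, 0 < t → 0 ≤ g t := fun t ht => by
    have h1 := log_le_digamma_add_one ht
    rw [digamma_add_one ht] at h1
    simp only [g]
    linarith
  have g_le : ∀ t, 0 < t → g t ≤ 1 / t := fun t ht => by
    simp only [g]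
    linarith [digamma_le_log ht]
  have g_tendsto : ∀ t, 0 < t → Filter.Tendsto (fun n : ℕ => g (t + n)) Filter.atTop (nhds 0) := by
    intro t ht
    have hpos : ∀ n : ℕ, 0 < t + n := fun n => by positivity
    refine squeeze_zero (fun n => g_nonneg _ (hpos n)) (fun n => g_le _ (hpos n)) ?_
    simp only [one_div]
    exact tendsto_inv_atTop_zero.comp
      (Filter.tendsto_atTop_add_const_left _ t tendsto_natCast_atTop_atTop)
  have g_step : ∀ t, 0 < t →
      g (t + 1) - g t = 1 / (t + 1) - Real.log (t + 1) + Real.log t := fun t ht => by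
    simp only [g, digamma_add_one ht]
    ring
  have hanti : Antitone (fun n : ℕ => g (u + n) - g (v + n)) := by
    refine antitone_nat_of_succ_le fun n => ?_
    have hun : 0 < u + n := by positivity
    have hvn : 0 < v + n := by positivity
    have h := monotoneOn_gap_step (Set.mem_Ioi.2 hun) (Set.mem_Ioi.2 hvn) (by linarith)
    simp only at h
    rw [← g_step _ hun, ← g_step _ hvn] at h
    push_cast
    rw [← add_assoc, ← add_assoc]
    linarith
  have hlim := (g_tendsto u hu0).sub (g_tendsto v hv0)
  have h0 := hanti.le_of_tendsto hlim 0
  simp only [Nat.cast_zero, add_zero, sub_zero] at h0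
  exact sub_nonneg.1 h0

lemma deriv_digamma_le {u : ℝ} (hu : 0 < u) : deriv digamma u ≤ 1 / u + 1 / u ^ 2 := by
  have h := ((differentiableAt_digamma hu).hasDerivAt.sub (Real.hasDerivAt_log hu.ne')).add
    (hasDerivAt_inv hu.ne')
  have hmem : Set.Ioi (0 : ℝ) ∈ nhds u := Ioi_mem_nhds hu
  have hle := antitoneOn_gap.derivWithin_nonpos (x := u)
  rw [derivWithin_of_mem_nhds hmem] at hle
  have heq : deriv (fun u : ℝ => digamma u - Real.log u + 1 / u) u
      = deriv digamma u - u⁻¹ + -(u ^ 2)⁻¹ := by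
    simp only [one_div]
    exact h.deriv
  rw [heq] at hle
  rw [one_div, one_div]
  linarith

theorem stmt_2 (y : ℝ) (hy : y ∈ Set.Ioo (-1 : ℝ) (-1/2)) :
    StrictAntiOn (fun x : ℝ =>
      x * digamma (x + y + 1) - Real.log (Real.Gamma (x + y + 1)) +
        Real.log (Real.Gamma (y + 1)) - x ^ 2 / (2 * (y + 1) * (x + y + 1)))
      (Set.Ici (-2 * (y + 1) ^ 2 / (1 + 2 * y))) := by
  obtain ⟨hy1, hy2⟩ := hy
  obtain ⟨a, rfl⟩ : ∃ a, y = a - 1 := ⟨y + 1, by ring⟩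
  have ha : 0 < a := by linarith
  have ha2 : 0 < 1 - 2 * a := by linarith
  have hend : -2 * (a - 1 + 1) ^ 2 / (1 + 2 * (a - 1)) = 2 * a ^ 2 / (1 - 2 * a) := by
    rw [div_eq_div_iff (by linarith) ha2.ne']
    ring
  have hendpos : 0 < 2 * a ^ 2 / (1 - 2 * a) := by positivity
  have hshift : ∀ x : ℝ, x + (a - 1) + 1 = x + a := fun x => by ring
  rw [hend]
  simp only [hshift, sub_add_cancel]
  have hd : ∀ x : ℝ, 0 < x →
      HasDerivAt (fun x : ℝ => x * digamma (x + a) - Real.log (Real.Gamma (x + a)) +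
        Real.log (Real.Gamma a) - x ^ 2 / (2 * a * (x + a)))
        (x * (deriv digamma (x + a) - 1 / (2 * a * (x + a)) - 1 / (2 * (x + a) ^ 2))) x := by
    intro x hx
    have hu : 0 < x + a := by positivity
    have h1 := (differentiableAt_digamma hu).hasDerivAt.comp_add_const x a
    have h2 := (hasDerivAt_log_Gamma hu).comp_add_const x a
    have h3 : HasDerivAt (fun x : ℝ => 2 * a * (x + a)) (2 * a * 1) x :=
      ((hasDerivAt_id x).add_const a).const_mul (2 * a)
    have h4 := ((((hasDerivAt_id x).mul h1).sub h2).add_const (Real.log (Real.Gamma a))).sub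
      ((hasDerivAt_pow 2 x).div h3 (by positivity))
    refine h4.congr_deriv ?_
    simp only [id_eq]
    field_simp
    ring
  refine strictAntiOn_of_deriv_neg (convex_Ici _)
    (fun x hx => (hd x (hendpos.trans_le hx)).continuousAt.continuousWithinAt) ?_
  rw [interior_Ici]
  intro x hx
  have hx0 : 0 < x := hendpos.trans hx
  have hu : 0 < x + a := by positivity
  rw [(hd x hx0).deriv]
  have hx' : 2 * a ^ 2 < x * (1 - 2 * a) := (div_lt_iff₀ ha2).1 hx
  -- the position of the endpoint, `a < (x + a) (1 - 2 a)`, in reciprocal form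
  have key : 1 / (x + a) + 1 / (x + a) ^ 2 < 1 / (2 * a * (x + a)) + 1 / (2 * (x + a) ^ 2) := by
    have : 1 / (2 * a * (x + a)) + 1 / (2 * (x + a) ^ 2) - (1 / (x + a) + 1 / (x + a) ^ 2)
        = (x * (1 - 2 * a) - 2 * a ^ 2) / (2 * a * (x + a) ^ 2) := by
      field_simp
      ring
    have hpos : 0 < (x * (1 - 2 * a) - 2 * a ^ 2) / (2 * a * (x + a) ^ 2) :=
      div_pos (by linarith) (by positivity)
    linarith
  exact mul_neg_of_pos_of_neg hx0 (by linarith [deriv_digamma_le hu])
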